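/- Let ε > 0, set S = (α+β)/2 + 1/2 + 1/(4·log n), T = ((α+β)/2)·(log((α+β)/2) + 2·log n − 1) + log n + 5/2, U = max{S + T, 2ε, 4ε·log n/τ, 4ε·(α+β)·log n/τ}, and take η = ε/U. Let X̂ minimize f over the set of n×n matrices with nonnegative entries, and assume h attains its minimum over ℝⁿ × ℝⁿ at some (u*, v*). Then for every integer k ≥ 1 + (τ·U/ε + 1)·(log(8·η·R) + log(τ·(τ+1)) + 3·log(U/ε)), the Sinkhorn iterate X^k = B(u^k, v^k) satisfies f(X^k) ≤ f(X̂) + ε. -/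

import Mathlib

/-- Generalized KL divergence, with the convention `0 · log 0 = 0`. -/
noncomputable def KL {n : ℕ} (x y : Fin n → ℝ) : ℝ :=
  ∑ i, (x i * Real.log (x i / y i) - x i + y i)

/-- The (unregularized) UOT objective. -/
noncomputable def fUOT {n : ℕ} (a b : Fin n → ℝ) (C : Fin n → Fin n → ℝ)
    (τ : ℝ) (X : Fin n → Fin n → ℝ) : ℝ :=
  (∑ i, ∑ j, C i j * X i j)
    + τ * KL (fun i => ∑ j, X i j) a + τ * KL (fun j => ∑ i, X i j) b

/-- The dual entropic regularized UOT objective. -/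
noncomputable def dualUOT {n : ℕ} (a b : Fin n → ℝ) (C : Fin n → Fin n → ℝ)
    (τ η : ℝ) (u v : Fin n → ℝ) : ℝ :=
  η * ∑ i, ∑ j, Real.exp ((u i + v j - C i j) / η)
    + τ * ∑ i, a i * Real.exp (-(u i) / τ)
    + τ * ∑ j, b j * Real.exp (-(v j) / τ)

/-- Fenchel–Young inequality for `t ↦ t log t - t`. -/
lemma mul_sub_exp_le_mul_log_sub {t : ℝ} (ht : 0 ≤ t) (z : ℝ) :
    t * z - Real.exp z ≤ t * Real.log t - t := by
  rcases ht.eq_or_lt with rfl | ht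
  · simpa using (Real.exp_pos z).le
  · have h := Real.add_one_le_exp (z - Real.log t)
    rw [Real.exp_sub, Real.exp_log ht, le_div_iff₀ ht] at h
    nlinarith

/-- Fenchel–Young inequality for the generalized KL divergence against a positive weight. -/
lemma mul_sub_mul_exp_le_kl_term {t y : ℝ} (ht : 0 ≤ t) (hy : 0 < y) (z : ℝ) :
    t * z - y * Real.exp z ≤ t * Real.log (t / y) - t := by
  have h := mul_sub_exp_le_mul_log_sub (div_nonneg ht hy.le) z
  have h2 := mul_le_mul_of_nonneg_left h hy.le
  have e : y * (t / y) = t := by field_simp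
  calc t * z - y * Real.exp z = y * (t / y * z - Real.exp z) := by rw [mul_sub, ← mul_assoc, e]
    _ ≤ _ := h2
    _ = _ := by rw [mul_sub, ← mul_assoc, e]

lemma KL_nonneg {n : ℕ} {x y : Fin n → ℝ} (hx : ∀ i, 0 ≤ x i) (hy : ∀ i, 0 < y i) :
    0 ≤ KL x y := by
  refine Finset.sum_nonneg fun i _ => ?_
  have := mul_sub_mul_exp_le_kl_term (hx i) (hy i) 0
  simp at this
  linarith

lemma fUOT_nonneg {n : ℕ} {a b : Fin n → ℝ} (ha : ∀ i, 0 < a i) (hb : ∀ j, 0 < b j)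
    {C : Fin n → Fin n → ℝ} (hC : ∀ i j, 0 ≤ C i j) {τ : ℝ} (hτ : 0 < τ)
    {X : Fin n → Fin n → ℝ} (hX : ∀ i j, 0 ≤ X i j) : 0 ≤ fUOT a b C τ X := by
  have h1 := KL_nonneg (x := fun i => ∑ j, X i j) (fun i => Finset.sum_nonneg fun j _ => hX i j) ha
  have h2 := KL_nonneg (x := fun j => ∑ i, X i j) (fun j => Finset.sum_nonneg fun i _ => hX i j) hb
  have h3 : 0 ≤ ∑ i, ∑ j, C i j * X i j :=
    Finset.sum_nonneg fun i _ => Finset.sum_nonneg fun j _ => mul_nonneg (hC i j) (hX i j)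
  unfold fUOT
  positivity

lemma KL_smul {n : ℕ} (x y : Fin n → ℝ) (hy : ∀ i, y i ≠ 0) {t : ℝ} (ht : 0 < t) :
    KL (fun i => t * x i) y
      = t * KL x y + (1 - t) * ∑ i, y i + t * Real.log t * ∑ i, x i := by
  unfold KL
  simp only [Finset.mul_sum, ← Finset.sum_add_distrib]
  refine Finset.sum_congr rfl fun i _ => ?_
  by_cases hx : x i = 0
  · simp [hx]; ring
  · rw [mul_div_assoc, Real.log_mul ht.ne' (div_ne_zero hx (hy i))]
    ring

lemma fUOT_smul {n : ℕ} {a b : Fin n → ℝ} (ha : ∀ i, 0 < a i) (hb : ∀ j, 0 < b j)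
    (C : Fin n → Fin n → ℝ) (τ : ℝ) (X : Fin n → Fin n → ℝ) {t : ℝ} (ht : 0 < t) :
    fUOT a b C τ (fun i j => t * X i j) = t * fUOT a b C τ X
      + (1 - t) * (τ * (∑ i, a i + ∑ j, b j)) + 2 * τ * (t * Real.log t) * ∑ i, ∑ j, X i j := by
  unfold fUOT
  simp only [← Finset.mul_sum]
  rw [KL_smul _ _ (fun i => (ha i).ne') ht, KL_smul _ _ (fun i => (hb i).ne') ht,
    Finset.sum_comm (f := fun j i => X i j)]
  have : ∑ i, ∑ j, C i j * (t * X i j) = t * ∑ i, ∑ j, C i j * X i j := by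
    simp only [Finset.mul_sum]
    exact Finset.sum_congr rfl fun i _ => Finset.sum_congr rfl fun j _ => by ring
  rw [this]
  ring

/-- The total mass of a minimizer of the UOT objective is at most the mean of the two masses. -/
lemma sum_le_of_fUOT_min {n : ℕ} {a b : Fin n → ℝ} (ha : ∀ i, 0 < a i) (hb : ∀ j, 0 < b j)
    {C : Fin n → Fin n → ℝ} (hC : ∀ i j, 0 ≤ C i j) {τ : ℝ} (hτ : 0 < τ)
    {X : Fin n → Fin n → ℝ} (hX : ∀ i j, 0 ≤ X i j)
    (hmin : ∀ Y : Fin n → Fin n → ℝ, (∀ i j, 0 ≤ Y i j) → fUOT a b C τ X ≤ fUOT a b C τ Y) :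
    ∑ i, ∑ j, X i j ≤ (∑ i, a i + ∑ j, b j) / 2 := by
  set x := ∑ i, ∑ j, X i j with hx
  set w := ∑ i, a i + ∑ j, b j with hw
  have hx0 : 0 ≤ x := Finset.sum_nonneg fun i _ => Finset.sum_nonneg fun j _ => hX i j
  refine le_of_forall_lt_imp_le_of_dense fun c hc => ?_
  by_contra! hcon
  have hw0 : 0 ≤ w := add_nonneg (Finset.sum_nonneg fun i _ => (ha i).le)
    (Finset.sum_nonneg fun i _ => (hb i).le)
  have hxpos : 0 < x := by linarith
  have hcpos : 0 < c := by linarith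
  have ht : 0 < c / x := div_pos hcpos hxpos
  have ht1 : c / x < 1 := (div_lt_one hxpos).2 hc
  have htx : c / x * x = c := by field_simp
  set t := c / x
  have h := hmin (fun i j => t * X i j) fun i j => mul_nonneg ht.le (hX i j)
  rw [fUOT_smul ha hb C τ X ht, ← hx, ← hw] at h
  have hf := fUOT_nonneg ha hb hC hτ hX
  have hlog := Real.log_le_sub_one_of_pos ht
  have e : 2 * τ * (t * Real.log t) * x = 2 * τ * c * Real.log t := by rw [← htx]; ring
  rw [e] at h
  have h3 : 2 * τ * c * Real.log t ≤ 2 * τ * c * (t - 1) :=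
    mul_le_mul_of_nonneg_left hlog (by positivity)
  have h4 : 0 ≤ (1 - t) * fUOT a b C τ X := mul_nonneg (by linarith) hf
  have h5 : 0 ≤ (1 - t) * τ * (w - 2 * c) := by nlinarith
  have h6 : 0 < (1 - t) * τ := mul_pos (by linarith) hτ
  nlinarith

/-- Weak duality for the entropic regularized UOT problem. -/
lemma neg_dualUOT_le {n : ℕ} {a b : Fin n → ℝ} (ha : ∀ i, 0 < a i) (hb : ∀ j, 0 < b j)
    (C : Fin n → Fin n → ℝ) {τ η : ℝ} (hτ : 0 < τ) (hη : 0 < η) (u v : Fin n → ℝ)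
    {X : Fin n → Fin n → ℝ} (hX : ∀ i j, 0 ≤ X i j) :
    -dualUOT a b C τ η u v + τ * (∑ i, a i + ∑ j, b j)
      ≤ fUOT a b C τ X + η * ∑ i, ∑ j, (X i j * Real.log (X i j) - X i j) := by
  have hkl : ∀ (x y w : Fin n → ℝ), (∀ i, 0 ≤ x i) → (∀ i, 0 < y i) →
      -(∑ i, x i * w i) - τ * ∑ i, y i * Real.exp (-(w i) / τ) + τ * ∑ i, y i ≤ τ * KL x y := by
    intro x y w hx hy
    unfold KL
    simp only [Finset.mul_sum, ← Finset.sum_neg_distrib, ← Finset.sum_add_distrib,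
      ← Finset.sum_sub_distrib]
    refine Finset.sum_le_sum fun i _ => ?_
    have h := mul_le_mul_of_nonneg_left
      (mul_sub_mul_exp_le_kl_term (hx i) (hy i) (-(w i) / τ)) hτ.le
    have e : τ * (x i * (-(w i) / τ)) = -(x i * w i) := by field_simp
    rw [mul_sub, e] at h
    linarith
  have h1 := hkl (fun i => ∑ j, X i j) a u (fun i => Finset.sum_nonneg fun j _ => hX i j) ha
  have h2 := hkl (fun j => ∑ i, X i j) b v (fun j => Finset.sum_nonneg fun i _ => hX i j) hb
  have h3 : ∑ i, ∑ j, (X i j * (u i + v j - C i j)) - η * ∑ i, ∑ j, Real.exp ((u i + v j - C i j) / η)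
      ≤ η * ∑ i, ∑ j, (X i j * Real.log (X i j) - X i j) := by
    simp only [Finset.mul_sum, ← Finset.sum_sub_distrib]
    refine Finset.sum_le_sum fun i _ => Finset.sum_le_sum fun j _ => ?_
    have h := mul_le_mul_of_nonneg_left
      (mul_sub_exp_le_mul_log_sub (hX i j) ((u i + v j - C i j) / η)) hη.le
    have e : η * (X i j * ((u i + v j - C i j) / η)) = X i j * (u i + v j - C i j) := by field_simp
    rw [mul_sub, e] at h
    exact h
  have h4 : ∑ i, ∑ j, (X i j * (u i + v j - C i j))
      = ∑ i, (∑ j, X i j) * u i + ∑ j, (∑ i, X i j) * v j - ∑ i, ∑ j, C i j * X i j := by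
    simp only [Finset.sum_mul]
    rw [Finset.sum_comm (f := fun j i => X i j * v j)]
    simp only [← Finset.sum_add_distrib, ← Finset.sum_sub_distrib]
    exact Finset.sum_congr rfl fun i _ => Finset.sum_congr rfl fun j _ => by ring
  unfold dualUOT fUOT
  linarith

/-- A nonnegative matrix has entropy at most that of the uniform one of the same mass. -/
lemma sum_mul_log_ge {n : ℕ} (hn : n ≠ 0) {X : Fin n → Fin n → ℝ} (hX : ∀ i j, 0 ≤ X i j)
    (hpos : 0 < ∑ i, ∑ j, X i j) :
    (∑ i, ∑ j, X i j) * Real.log (∑ i, ∑ j, X i j) - 2 * (∑ i, ∑ j, X i j) * Real.log n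
      ≤ ∑ i, ∑ j, X i j * Real.log (X i j) := by
  set x := ∑ i, ∑ j, X i j with hx
  have hn' : (0 : ℝ) < n := by positivity
  have key : ∑ i, ∑ j, (X i j * Real.log (x / (n : ℝ) ^ 2) - x / (n : ℝ) ^ 2)
      ≤ ∑ i, ∑ j, (X i j * Real.log (X i j) - X i j) :=
    Finset.sum_le_sum fun i _ => Finset.sum_le_sum fun j _ => by
      have h := mul_sub_exp_le_mul_log_sub (hX i j) (Real.log (x / (n : ℝ) ^ 2))
      rwa [Real.exp_log (by positivity)] at h
  simp only [Finset.sum_sub_distrib, ← Finset.sum_mul, ← hx, Finset.sum_const, Finset.card_univ,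
    Fintype.card_fin, nsmul_eq_mul] at key
  rw [Real.log_div hpos.ne' (by positivity), Real.log_pow] at key
  have e : (n : ℝ) * n * (x / (n : ℝ) ^ 2) = x := by field_simp
  rw [e] at key
  push_cast at key
  nlinarith

lemma sum_mul_log_le {n : ℕ} {X : Fin n → Fin n → ℝ} (hX : ∀ i j, 0 ≤ X i j) :
    ∑ i, ∑ j, X i j * Real.log (X i j)
      ≤ (∑ i, ∑ j, X i j) * Real.log (∑ i, ∑ j, X i j) := by
  set x := ∑ i, ∑ j, X i j
  simp only [x, Finset.sum_mul]
  refine Finset.sum_le_sum fun i _ => Finset.sum_le_sum fun j _ => ?_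
  rcases (hX i j).eq_or_lt with h | h
  · simp [← h]
  · refine mul_le_mul_of_nonneg_left (Real.log_le_log h ?_) h.le
    calc X i j ≤ ∑ j, X i j :=
          Finset.single_le_sum (f := fun j => X i j) (fun j _ => hX i j) (Finset.mem_univ j)
      _ ≤ _ := Finset.single_le_sum (f := fun i => ∑ j, X i j)
          (fun i _ => Finset.sum_nonneg fun j _ => hX i j) (Finset.mem_univ i)

lemma mul_log_sub_self_le {t s : ℝ} (ht : 0 ≤ t) (hts : t ≤ s) :
    t * Real.log t - t ≤ s * Real.log s - s + 1 := by
  rcases le_total s 1 with hs | hs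
  · have h1 := mul_sub_exp_le_mul_log_sub (ht.trans hts) 0
    have h2 : t * Real.log t ≤ 0 :=
      mul_nonpos_of_nonneg_of_nonpos ht (Real.log_nonpos ht (hts.trans hs))
    simp at h1
    linarith
  · have h := mul_sub_exp_le_mul_log_sub (ht.trans hts) (Real.log s)
    have hl := Real.log_nonneg hs
    rcases ht.eq_or_lt with rfl | htp
    · have h1 := mul_sub_exp_le_mul_log_sub hts 0
      simp at h1 ⊢
      linarith
    · have h1 : Real.log t ≤ Real.log s := Real.log_le_log htp hts
      nlinarith [mul_le_mul_of_nonneg_left h1 ht, mul_nonneg (sub_nonneg.2 hts) hl,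
        mul_sub_exp_le_mul_log_sub (ht.trans hts) 0, Real.exp_zero,
        Real.log_le_sub_one_of_pos htp, Real.add_one_le_exp (Real.log s - 0)]

lemma log_sum_exp_le {n : ℕ} [NeZero n] {x y : Fin n → ℝ} {D : ℝ} (h : ∀ j, x j ≤ y j + D) :
    Real.log (∑ j, Real.exp (x j)) ≤ Real.log (∑ j, Real.exp (y j)) + D := by
  have hpos : ∀ z : Fin n → ℝ, 0 < ∑ j, Real.exp (z j) := fun z =>
    Finset.sum_pos (fun j _ => Real.exp_pos _) Finset.univ_nonempty
  have e : Real.log (∑ j, Real.exp (y j)) + D = Real.log (∑ j, Real.exp (y j + D)) := by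
    simp only [Real.exp_add, ← Finset.sum_mul]
    rw [Real.log_mul (hpos y).ne' (Real.exp_pos D).ne', Real.log_exp]
  rw [e]
  exact Real.log_le_log (hpos x) (Finset.sum_le_sum fun j _ => Real.exp_le_exp.2 (h j))

/-- One half-step of the Sinkhorn iteration, as a function of the other dual variable. -/
noncomputable def sinkhornStep {n : ℕ} (a : Fin n → ℝ) (C : Fin n → Fin n → ℝ) (τ η : ℝ)
    (v : Fin n → ℝ) (i : Fin n) : ℝ :=
  η * τ / (η + τ) * (Real.log (a i) - Real.log (∑ j, Real.exp ((v j - C i j) / η)))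

lemma log_sum_exp_add {n : ℕ} [NeZero n] (C : Fin n → ℝ) (η t : ℝ) (v : Fin n → ℝ) :
    Real.log (∑ j, Real.exp ((t + v j - C j) / η))
      = t / η + Real.log (∑ j, Real.exp ((v j - C j) / η)) := by
  have : ∀ j, Real.exp ((t + v j - C j) / η) = Real.exp (t / η) * Real.exp ((v j - C j) / η) :=
    fun j => by rw [← Real.exp_add]; ring_nf
  simp only [this, ← Finset.mul_sum]
  rw [Real.log_mul (Real.exp_pos _).ne'
    (Finset.sum_pos (fun j _ => Real.exp_pos _) Finset.univ_nonempty).ne', Real.log_exp]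

lemma abs_sinkhornStep_sub_le {n : ℕ} [NeZero n] (a : Fin n → ℝ) (C : Fin n → Fin n → ℝ)
    {τ η : ℝ} (hτ : 0 < τ) (hη : 0 < η) {v w : Fin n → ℝ} {D : ℝ}
    (h : ∀ j, |v j - w j| ≤ D) (i : Fin n) :
    |sinkhornStep a C τ η v i - sinkhornStep a C τ η w i| ≤ τ / (η + τ) * D := by
  have hlip : ∀ x y : Fin n → ℝ, (∀ j, x j ≤ y j + D) →
      Real.log (∑ j, Real.exp ((x j - C i j) / η))
        ≤ Real.log (∑ j, Real.exp ((y j - C i j) / η)) + D / η := fun x y hxy =>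
    log_sum_exp_le fun j => by
      rw [← add_div]; exact div_le_div_of_nonneg_right (by linarith [hxy j]) hη.le
  have h1 := hlip v w fun j => by linarith [(abs_le.1 (h j)).2]
  have h2 := hlip w v fun j => by linarith [(abs_le.1 (h j)).1]
  have e : τ / (η + τ) * D = η * τ / (η + τ) * (D / η) := by field_simp
  rw [e]
  unfold sinkhornStep
  rw [← mul_sub, abs_mul, abs_of_pos (by positivity)]
  exact mul_le_mul_of_nonneg_left (abs_le.2 ⟨by linarith, by linarith⟩) (by positivity)

lemma abs_sinkhornStep_le {n : ℕ} [NeZero n] {a : Fin n → ℝ} {C : Fin n → Fin n → ℝ}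
    (hC : ∀ i j, 0 ≤ C i j) {τ η : ℝ} (hτ : 0 < τ) (hη : 0 < η) {c m D : ℝ}
    (hCc : ∀ i j, C i j ≤ c) (ham : ∀ i, |Real.log (a i)| ≤ m) {v : Fin n → ℝ}
    (h : ∀ j, |v j| ≤ D) (i : Fin n) :
    |sinkhornStep a C τ η v i|
      ≤ η * τ / (η + τ) * (m + max (Real.log n) (c / η - Real.log n) + D / η) := by
  have hn : Real.log (∑ j : Fin n, Real.exp 0) = Real.log n := by simp
  have h1 := log_sum_exp_le (x := fun j => (v j - C i j) / η) (y := fun _ => 0) (D := D / η)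
    fun j => by
      rw [zero_add]
      exact div_le_div_of_nonneg_right (by linarith [hC i j, (abs_le.1 (h j)).2]) hη.le
  have h2 := log_sum_exp_le (x := fun _ => 0) (y := fun j => (v j - C i j) / η) (D := c / η + D / η)
    fun j => by
      rw [← add_div, ← add_div]
      exact div_nonneg (by linarith [hCc i j, (abs_le.1 (h j)).1]) hη.le
  rw [hn] at h1 h2
  have h3 := abs_le.1 (ham i)
  unfold sinkhornStep
  rw [abs_mul, abs_of_pos (by positivity)]
  refine mul_le_mul_of_nonneg_left (abs_le.2 ⟨?_, ?_⟩) (by positivity)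
  · linarith [le_max_left (Real.log n) (c / η - Real.log n)]
  · linarith [le_max_right (Real.log n) (c / η - Real.log n)]

/-- The defect in the first-order condition is proportional to the next Sinkhorn increment. -/
lemma add_mul_log_sub_eq_sinkhornStep {n : ℕ} [NeZero n] (a : Fin n → ℝ) (C : Fin n → Fin n → ℝ)
    {τ η : ℝ} (hτ : 0 < τ) (hη : 0 < η) (u v : Fin n → ℝ) (i : Fin n) :
    u i + τ * (Real.log (∑ j, Real.exp ((u i + v j - C i j) / η)) - Real.log (a i))
      = (η + τ) / η * (u i - sinkhornStep a C τ η v i) := by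
  rw [log_sum_exp_add (C i)]
  unfold sinkhornStep
  field_simp
  ring

/-- Value of the UOT objective at a Gibbs matrix, in terms of the first-order defects. -/
lemma fUOT_gibbs {n : ℕ} [NeZero n] {a b : Fin n → ℝ} (ha : ∀ i, 0 < a i) (hb : ∀ j, 0 < b j)
    (C : Fin n → Fin n → ℝ) (τ : ℝ) {η : ℝ} (hη : 0 < η) (u v : Fin n → ℝ)
    {X : Fin n → Fin n → ℝ} (hX : ∀ i j, X i j = Real.exp ((u i + v j - C i j) / η)) :
    fUOT a b C τ X
      = ∑ i, (∑ j, X i j) * (u i + τ * (Real.log (∑ j, X i j) - Real.log (a i)))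
        + ∑ j, (∑ i, X i j) * (v j + τ * (Real.log (∑ i, X i j) - Real.log (b j)))
        - 2 * τ * ∑ i, ∑ j, X i j + τ * (∑ i, a i + ∑ j, b j)
        - η * ∑ i, ∑ j, X i j * Real.log (X i j) := by
  have hXpos : ∀ i j, 0 < X i j := fun i j => by rw [hX]; exact Real.exp_pos _
  have hkl : ∀ (x y w : Fin n → ℝ), (∀ i, 0 < x i) → (∀ i, 0 < y i) →
      τ * KL x y = ∑ i, x i * (w i + τ * (Real.log (x i) - Real.log (y i)))
        - ∑ i, x i * w i - τ * ∑ i, x i + τ * ∑ i, y i := by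
    intro x y w hx hy
    unfold KL
    simp only [Finset.mul_sum, ← Finset.sum_add_distrib, ← Finset.sum_sub_distrib]
    refine Finset.sum_congr rfl fun i _ => ?_
    rw [Real.log_div (hx i).ne' (hy i).ne']
    ring
  have h1 := hkl (fun i => ∑ j, X i j) a u
    (fun i => Finset.sum_pos (fun j _ => hXpos i j) Finset.univ_nonempty) ha
  have h2 := hkl (fun j => ∑ i, X i j) b v
    (fun j => Finset.sum_pos (fun i _ => hXpos i j) Finset.univ_nonempty) hb
  have h3 : η * ∑ i, ∑ j, X i j * Real.log (X i j)
      = ∑ i, (∑ j, X i j) * u i + ∑ j, (∑ i, X i j) * v j - ∑ i, ∑ j, C i j * X i j := by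
    simp only [Finset.sum_mul]
    rw [Finset.sum_comm (f := fun j i => X i j * v j)]
    simp only [← Finset.sum_add_distrib, ← Finset.sum_sub_distrib, Finset.mul_sum]
    refine Finset.sum_congr rfl fun i _ => Finset.sum_congr rfl fun j _ => ?_
    have : Real.log (X i j) = (u i + v j - C i j) / η := by rw [hX, Real.log_exp]
    rw [this]
    field_simp
  have h4 : ∑ j, ∑ i, X i j = ∑ i, ∑ j, X i j := Finset.sum_comm
  unfold fUOT
  rw [h4] at h2
  linarith

/-- The duality gap caused by a first-order defect is quadratic in the defect. -/
lemma sum_defect_gap_le {n : ℕ} {a A u : Fin n → ℝ} (ha : ∀ i, 0 < a i) (hA : ∀ i, 0 < A i)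
    {τ d : ℝ} (hτ : 0 < τ) (hdτ : d ≤ τ)
    (hr : ∀ i, |u i + τ * (Real.log (A i) - Real.log (a i))| ≤ d) :
    ∑ i, A i * (u i + τ * (Real.log (A i) - Real.log (a i)))
        + τ * ∑ i, a i * Real.exp (-(u i) / τ) - τ * ∑ i, A i
      ≤ d ^ 2 / τ * ∑ i, A i := by
  simp only [Finset.mul_sum, ← Finset.sum_add_distrib, ← Finset.sum_sub_distrib]
  refine Finset.sum_le_sum fun i _ => ?_
  have hri := hr i
  set r := u i + τ * (Real.log (A i) - Real.log (a i)) with hrdef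
  have e : a i * Real.exp (-(u i) / τ) = A i * Real.exp (-(r / τ)) := by
    have : -(u i) / τ = -(r / τ) + Real.log (A i) - Real.log (a i) := by
      rw [hrdef]; field_simp; ring
    rw [this, Real.exp_sub, Real.exp_add, Real.exp_log (hA i), Real.exp_log (ha i)]
    field_simp [(ha i).ne']
  have h1 : |-(r / τ)| ≤ 1 := by
    rw [abs_neg, abs_div, abs_of_pos hτ, div_le_one hτ]
    exact hri.trans hdτ
  have h2 := (abs_le.1 (Real.abs_exp_sub_one_sub_id_le h1)).2
  have h3 : r ^ 2 ≤ d ^ 2 := sq_le_sq' (by linarith [(abs_le.1 hri).1]) (abs_le.1 hri).2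
  have h4 : τ * (Real.exp (-(r / τ)) - 1 - -(r / τ)) ≤ d ^ 2 / τ := by
    calc _ ≤ τ * (-(r / τ)) ^ 2 := mul_le_mul_of_nonneg_left h2 hτ.le
      _ = r ^ 2 / τ := by field_simp
      _ ≤ _ := div_le_div_of_nonneg_right h3 hτ.le
  have h5 : τ * (Real.exp (-(r / τ)) - 1 - -(r / τ)) = τ * Real.exp (-(r / τ)) - τ + r := by
    field_simp; ring
  rw [e]
  have h6 := mul_le_mul_of_nonneg_left h4 (hA i).le
  rw [h5] at h6
  linarith

lemma log_two_le_log_natCast {n : ℕ} (hn : 2 ≤ n) : (0.69 : ℝ) ≤ Real.log n := by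
  have h1 : Real.log 2 ≤ Real.log n := Real.log_le_log (by norm_num) (by exact_mod_cast hn)
  linarith [Real.log_two_gt_d9]

lemma entropic_error_le {L s x : ℝ} (hL : 0.69 ≤ L) (hs : 0 ≤ s)
    (hx : x ≤ s + 1 / 6 + 1 / (6 * L)) :
    x / (128 * L) + (s * Real.log s - s + 1) + (1 + 2 * x * L)
      ≤ (s + 1 / 2 + 1 / (4 * L)) + (s * (Real.log s + 2 * L - 1) + L + 5 / 2) := by
  have hL0 : 0 < L := by linarith
  obtain ⟨c, hc⟩ : ∃ c, c = 1 / L := ⟨_, rfl⟩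
  have hc0 : 0 < c := by rw [hc]; positivity
  have hcL : c * L = 1 := by rw [hc]; field_simp
  have hc1 : c ≤ 1.45 := by rw [hc, div_le_iff₀ hL0]; linarith
  have e1 : 1 / (6 * L) = c / 6 := by rw [hc]; field_simp
  have e2 : 1 / (4 * L) = c / 4 := by rw [hc]; field_simp
  have e3 : x / (128 * L) = x * c / 128 := by rw [hc]; field_simp
  rw [e1] at hx
  rw [e2, e3]
  have h1 : x * c ≤ (s + 1 / 6 + c / 6) * c := mul_le_mul_of_nonneg_right hx hc0.le
  have h2 : (s + 1 / 6 + c / 6) * c ≤ (s + 1 / 6 + c / 6) * 1.45 :=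
    mul_le_mul_of_nonneg_left hc1 (by positivity)
  have h3 : x * L ≤ (s + 1 / 6 + c / 6) * L := mul_le_mul_of_nonneg_right hx hL0.le
  nlinarith

/-- A Gibbs matrix with small first-order defects nearly minimizes the UOT objective. -/
lemma fUOT_gibbs_le {n : ℕ} (hn : 2 ≤ n) {a b : Fin n → ℝ}
    (ha : ∀ i, 0 < a i) (hb : ∀ j, 0 < b j) {C : Fin n → Fin n → ℝ} (hC : ∀ i j, 0 ≤ C i j)
    {τ η s : ℝ} (hτ : 0 < τ) (hη : 0 < η) (hs : s = (∑ i, a i + ∑ j, b j) / 2)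
    (hτ1 : 4 * η * Real.log n ≤ τ) (hτ2 : 8 * η * s * Real.log n ≤ τ)
    {Y : Fin n → Fin n → ℝ} (hY : ∀ i j, 0 ≤ Y i j)
    (hmin : ∀ Z : Fin n → Fin n → ℝ, (∀ i j, 0 ≤ Z i j) → fUOT a b C τ Y ≤ fUOT a b C τ Z)
    {u v : Fin n → ℝ} {X : Fin n → Fin n → ℝ}
    (hX : ∀ i j, X i j = Real.exp ((u i + v j - C i j) / η))
    (hr : ∀ i, |u i + τ * (Real.log (∑ j, X i j) - Real.log (a i))| ≤ η / 8)
    (hc : ∀ j, |v j + τ * (Real.log (∑ i, X i j) - Real.log (b j))| ≤ η / 8) :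
    fUOT a b C τ X ≤ fUOT a b C τ Y
      + η * ((s + 1 / 2 + 1 / (4 * Real.log n))
        + (s * (Real.log s + 2 * Real.log n - 1) + Real.log n + 5 / 2)) := by
  have : NeZero n := ⟨by omega⟩
  have hL := log_two_le_log_natCast hn
  set L := Real.log n with hLdef
  have hL0 : 0 < L := by linarith
  have hs0 : 0 ≤ s := by
    rw [hs]
    exact div_nonneg (add_nonneg (Finset.sum_nonneg fun i _ => (ha i).le)
      (Finset.sum_nonneg fun i _ => (hb i).le)) (by norm_num)
  have hw : ∑ i, a i + ∑ j, b j = 2 * s := by linarith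
  have hXpos : ∀ i j, 0 < X i j := fun i j => by rw [hX]; exact Real.exp_pos _
  have hrow : ∀ i, 0 < ∑ j, X i j := fun i =>
    Finset.sum_pos (fun j _ => hXpos i j) Finset.univ_nonempty
  have hcol : ∀ j, 0 < ∑ i, X i j := fun j =>
    Finset.sum_pos (fun i _ => hXpos i j) Finset.univ_nonempty
  have hητ : η / 8 ≤ τ := by nlinarith
  have hval := fUOT_gibbs ha hb C τ hη u v hX
  have hdual := neg_dualUOT_le ha hb C hτ hη u v hY
  have hgapr := sum_defect_gap_le ha hrow hτ hητ hr
  have hgapc := sum_defect_gap_le hb hcol hτ hητ hc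
  have hmass := sum_le_of_fUOT_min ha hb hC hτ hY hmin
  have hentX := sum_mul_log_ge (by omega) (fun i j => (hXpos i j).le)
    (Finset.sum_pos (fun i _ => hrow i) Finset.univ_nonempty)
  have hentY := sum_mul_log_le hY
  have hnonneg := fUOT_nonneg ha hb hC hτ fun i j => (hXpos i j).le
  have hdefr : ∑ i, (∑ j, X i j) * (u i + τ * (Real.log (∑ j, X i j) - Real.log (a i)))
      ≤ (∑ i, ∑ j, X i j) * (η / 8) := by
    rw [Finset.sum_mul]
    exact Finset.sum_le_sum fun i _ =>
      mul_le_mul_of_nonneg_left (abs_le.1 (hr i)).2 (hrow i).le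
  have hdefc : ∑ j, (∑ i, X i j) * (v j + τ * (Real.log (∑ i, X i j) - Real.log (b j)))
      ≤ (∑ i, ∑ j, X i j) * (η / 8) := by
    rw [Finset.sum_comm (f := fun i j => X i j), Finset.sum_mul]
    exact Finset.sum_le_sum fun j _ =>
      mul_le_mul_of_nonneg_left (abs_le.1 (hc j)).2 (hcol j).le
  have hY0 : 0 ≤ ∑ i, ∑ j, Y i j :=
    Finset.sum_nonneg fun i _ => Finset.sum_nonneg fun j _ => hY i j
  have hx0 : 0 < ∑ i, ∑ j, X i j := Finset.sum_pos (fun i _ => hrow i) Finset.univ_nonempty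
  have hswap : ∑ j, ∑ i, X i j = ∑ i, ∑ j, X i j := Finset.sum_comm
  have hexp : ∑ i, ∑ j, Real.exp ((u i + v j - C i j) / η) = ∑ i, ∑ j, X i j := by
    simp only [hX]
  unfold dualUOT at hdual
  rw [hexp] at hdual
  rw [hswap] at hgapc
  rw [hw] at hval hdual hmass
  simp only [Finset.sum_sub_distrib] at hdual
  set x := ∑ i, ∑ j, X i j
  set y := ∑ i, ∑ j, Y i j
  set N := fUOT a b C τ X
  set F := fUOT a b C τ Y
  set P := ∑ i, ∑ j, X i j * Real.log (X i j)
  set Q := ∑ i, ∑ j, Y i j * Real.log (Y i j)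
  generalize ∑ i, (∑ j, X i j) * (u i + τ * (Real.log (∑ j, X i j) - Real.log (a i))) = Er at *
  generalize ∑ j, (∑ i, X i j) * (v j + τ * (Real.log (∑ i, X i j) - Real.log (b j))) = Ec at *
  generalize ∑ i, a i * Real.exp (-(u i) / τ) = Sa at *
  generalize ∑ i, b i * Real.exp (-(v i) / τ) = Sb at *
  have hyb := mul_log_sub_self_le hY0 (by linarith : y ≤ s)
  have hxb : x - x * Real.log x ≤ 1 := by
    have := mul_sub_exp_le_mul_log_sub hx0.le 0
    simp at this
    linarith
  have hxs : x ≤ s + 1 / 6 + 1 / (6 * L) := by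
    have h1 : (τ - η * L) * x ≤ τ * s + η / 2 := by
      have : η * (-P) ≤ η * (2 * x * L + 1 - x) := mul_le_mul_of_nonneg_left (by linarith) hη.le
      nlinarith [mul_pos hη hx0]
    have h2 : τ * s + η / 2 ≤ (τ - η * L) * (s + 1 / 6 + 1 / (6 * L)) := by
      have e1 : 4 * η ≤ τ * (1 / L) := by
        rw [mul_one_div, le_div_iff₀ hL0]; exact hτ1
      have e2 : (τ - η * L) * (1 / (6 * L)) = τ * (1 / L) / 6 - η / 6 := by field_simp
      rw [mul_add, e2]
      nlinarith
    exact le_of_mul_le_mul_left (h1.trans h2) (by nlinarith)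
  have hgap : (η / 8) ^ 2 / τ ≤ η / (256 * L) := by
    rw [div_le_div_iff₀ hτ (by positivity)]
    nlinarith [mul_le_mul_of_nonneg_left hτ1 hη.le]
  have hgapx := mul_le_mul_of_nonneg_right hgap hx0.le
  have hfin := mul_le_mul_of_nonneg_left (entropic_error_le hL hs0 hxs) hη.le
  have e : η * (x / (128 * L)) = 2 * (η / (256 * L) * x) := by field_simp; ring
  rw [mul_add, mul_add, e] at hfin
  have hP : η * (x - P) ≤ η * (1 + 2 * x * L) := mul_le_mul_of_nonneg_left (by linarith) hη.le
  have hQ : η * (Q - y) ≤ η * (s * Real.log s - s + 1) :=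
    mul_le_mul_of_nonneg_left (by linarith) hη.le
  linarith

/-- Geometric decay of the increments of the alternating Sinkhorn steps. -/
lemma abs_sinkhorn_increment_le {n : ℕ} [NeZero n] {a b : Fin n → ℝ} {C : Fin n → Fin n → ℝ}
    {τ η D : ℝ} (hτ : 0 < τ) (hη : 0 < η) {u v : ℕ → Fin n → ℝ}
    (hu : ∀ m, u (2 * m + 1) = sinkhornStep a C τ η (v (2 * m)))
    (hv : ∀ m, v (2 * m + 2) = sinkhornStep b (fun j i => C i j) τ η (u (2 * m + 1)))
    (h0 : ∀ j, |v 2 j - v 0 j| ≤ D) (m : ℕ) :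
    (∀ j, |v (2 * m + 2) j - v (2 * m) j| ≤ (τ / (η + τ)) ^ (2 * m) * D) ∧
      ∀ i, |u (2 * m + 3) i - u (2 * m + 1) i| ≤ (τ / (η + τ)) ^ (2 * m + 1) * D := by
  have step : ∀ m, (∀ j, |v (2 * m + 2) j - v (2 * m) j| ≤ (τ / (η + τ)) ^ (2 * m) * D) →
      ∀ i, |u (2 * m + 3) i - u (2 * m + 1) i| ≤ (τ / (η + τ)) ^ (2 * m + 1) * D := by
    intro m h i
    have e := hu (m + 1)
    rw [show 2 * (m + 1) + 1 = 2 * m + 3 by ring, show 2 * (m + 1) = 2 * m + 2 by ring] at e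
    rw [e, hu m, pow_succ', mul_assoc]
    exact abs_sinkhornStep_sub_le a C hτ hη h i
  induction m with
  | zero => exact ⟨by simpa using h0, step 0 (by simpa using h0)⟩
  | succ m ih =>
    have h : ∀ j, |v (2 * (m + 1) + 2) j - v (2 * (m + 1)) j|
        ≤ (τ / (η + τ)) ^ (2 * (m + 1)) * D := by
      intro j
      rw [hv (m + 1), show 2 * (m + 1) = 2 * m + 2 by ring, hv m,
        show (τ / (η + τ)) ^ (2 * m + 2) = τ / (η + τ) * (τ / (η + τ)) ^ (2 * m + 1) by ring,
        mul_assoc]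
      exact abs_sinkhornStep_sub_le b _ hτ hη ih.2 j
    exact ⟨h, step (m + 1) h⟩

/-- The iteration threshold makes the contraction factor `(τ / (η + τ)) ^ (k - 1)` small. -/
lemma one_le_and_pow_le_of_threshold {τ η W : ℝ} (hτ : 0 < τ) (hη : 0 < η) (hW : 1 ≤ W) {k : ℕ}
    (hk : 1 + (τ / η + 1) * Real.log W ≤ k) :
    1 ≤ k ∧ (τ / (η + τ)) ^ (k - 1) ≤ 1 / W := by
  have hlW := Real.log_nonneg hW
  have h1 : (1 : ℝ) ≤ k := by
    have : 0 ≤ (τ / η + 1) * Real.log W := by positivity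
    linarith
  have hk1 : 1 ≤ k := by exact_mod_cast h1
  refine ⟨hk1, ?_⟩
  have hρ : 0 < τ / (η + τ) := by positivity
  rw [← Real.log_le_log_iff (by positivity) (by positivity), Real.log_pow, one_div, Real.log_inv,
    Nat.cast_sub hk1, Nat.cast_one]
  have h2 : Real.log (τ / (η + τ)) ≤ -(η / (η + τ)) := by
    have := Real.log_le_sub_one_of_pos hρ
    have e : τ / (η + τ) - 1 = -(η / (η + τ)) := by field_simp; ring
    linarith
  calc ((k : ℝ) - 1) * Real.log (τ / (η + τ)) ≤ (k - 1) * -(η / (η + τ)) :=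
        mul_le_mul_of_nonneg_left h2 (by linarith)
    _ ≤ (τ / η + 1) * Real.log W * -(η / (η + τ)) :=
        mul_le_mul_of_nonpos_right (by linarith) (by rw [neg_nonpos]; positivity)
    _ = -Real.log W := by field_simp; ring

/-- Main theorem: with `η = ε/U` and `k` at least the stated threshold, the Sinkhorn
iterate `X^k = B(u^k, v^k)` is an `ε`-approximation of the UOT optimum `X̂`, i.e.
`f(X^k) ≤ f(X̂) + ε`. -/
theorem stmt_19 {n : ℕ} (hn : 2 ≤ n) (a b : Fin n → ℝ)
    (ha : ∀ i, 0 < a i) (hb : ∀ j, 0 < b j)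
    (C : Fin n → Fin n → ℝ) (hC : ∀ i j, 0 ≤ C i j)
    (τ : ℝ) (hτ : 0 < τ) (ε : ℝ) (hε : 0 < ε)
    (S T U η : ℝ)
    (hS : S = ((∑ i, a i) + (∑ j, b j)) / 2 + 1 / 2 + 1 / (4 * Real.log n))
    (hT : T = (((∑ i, a i) + (∑ j, b j)) / 2)
        * (Real.log (((∑ i, a i) + (∑ j, b j)) / 2) + 2 * Real.log n - 1)
      + Real.log n + 5 / 2)
    (hU : U = max (max (S + T) (2 * ε))
        (max (4 * ε * Real.log n / τ)
          (4 * ε * ((∑ i, a i) + (∑ j, b j)) * Real.log n / τ)))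
    (hηdef : η = ε / U)
    (Xhat : Fin n → Fin n → ℝ) (hXhat : ∀ i j, 0 ≤ Xhat i j)
    (hfmin : ∀ Y : Fin n → Fin n → ℝ, (∀ i j, 0 ≤ Y i j) →
      fUOT a b C τ Xhat ≤ fUOT a b C τ Y)
    (ustar vstar : Fin n → ℝ)
    (hmin : ∀ p q : Fin n → ℝ, dualUOT a b C τ η ustar vstar ≤ dualUOT a b C τ η p q)
    (u v : ℕ → Fin n → ℝ)
    (h0u : u 0 = 0) (h0v : v 0 = 0)
    (heven : ∀ k : ℕ, Even k →
      (u (k + 1) = fun i => (η * τ / (η + τ)) *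
          (u k i / η + Real.log (a i)
            - Real.log (∑ j, Real.exp ((u k i + v k j - C i j) / η))))
        ∧ v (k + 1) = v k)
    (hodd : ∀ k : ℕ, Odd k →
      (v (k + 1) = fun j => (η * τ / (η + τ)) *
          (v k j / η + Real.log (b j)
            - Real.log (∑ i, Real.exp ((u k i + v k j - C i j) / η))))
        ∧ u (k + 1) = u k)
    (R : ℝ)
    (hR : R = max ‖(fun i => Real.log (a i))‖ ‖(fun j => Real.log (b j))‖
      + max (Real.log n) (‖C‖ / η - Real.log n))
    (k : ℕ)
    (hk : 1 + (τ * U / ε + 1) * (Real.log (8 * η * R) + Real.log (τ * (τ + 1))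
        + 3 * Real.log (U / ε)) ≤ (k : ℝ)) :
    fUOT a b C τ (fun i j => Real.exp ((u k i + v k j - C i j) / η))
      ≤ fUOT a b C τ Xhat + ε := by
  have : NeZero n := ⟨by omega⟩
  have hL := log_two_le_log_natCast hn
  have hL0 : 0 < Real.log n := by linarith
  have hU2 : 2 * ε ≤ U := by rw [hU]; exact (le_max_right _ _).trans (le_max_left _ _)
  have hUST : S + T ≤ U := by rw [hU]; exact (le_max_left _ _).trans (le_max_left _ _)
  have hU3 : 4 * ε * Real.log n / τ ≤ U := by
    rw [hU]; exact (le_max_left _ _).trans (le_max_right _ _)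
  have hU4 : 4 * ε * ((∑ i, a i) + (∑ j, b j)) * Real.log n / τ ≤ U := by
    rw [hU]; exact (le_max_right _ _).trans (le_max_right _ _)
  have hU0 : 0 < U := by linarith
  have hη : 0 < η := by rw [hηdef]; positivity
  have hηU : η * U = ε := by rw [hηdef]; field_simp
  have hη2 : η ≤ 1 / 2 := by rw [hηdef, div_le_iff₀ hU0]; linarith
  rw [div_le_iff₀ hτ] at hU3 hU4
  have hτ1 : 4 * η * Real.log n ≤ τ := by
    rw [← hηU] at hU3
    exact le_of_mul_le_mul_left (by linarith) hU0
  have hτ2 : 8 * η * ((∑ i, a i + ∑ j, b j) / 2) * Real.log n ≤ τ := by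
    rw [← hηU] at hU4
    exact le_of_mul_le_mul_left (by linarith) hU0
  have hητ : η ≤ τ := by nlinarith
  set c := ‖C‖ with hcdef
  have hCc : ∀ i j, C i j ≤ c := fun i j =>
    (le_abs_self _).trans ((norm_le_pi_norm (C i) j).trans (norm_le_pi_norm C i))
  set m := max ‖(fun i => Real.log (a i))‖ ‖(fun j => Real.log (b j))‖ with hm
  have ham : ∀ i, |Real.log (a i)| ≤ m := fun i =>
    (norm_le_pi_norm (fun i => Real.log (a i)) i).trans (le_max_left _ _)
  have hbm : ∀ j, |Real.log (b j)| ≤ m := fun j =>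
    (norm_le_pi_norm (fun j => Real.log (b j)) j).trans (le_max_right _ _)
  have hRL : Real.log n ≤ R := by
    have : 0 ≤ m := (abs_nonneg _).trans (ham 0)
    rw [hR]
    linarith [le_max_left (Real.log n) (c / η - Real.log n)]
  have hR0 : 0 < R := by linarith
  have hu : ∀ l, u (2 * l + 1) = sinkhornStep a C τ η (v (2 * l)) := fun l => by
    rw [(heven (2 * l) (even_two_mul l)).1]
    funext i
    rw [log_sum_exp_add (C i)]
    unfold sinkhornStep
    ring
  have hv : ∀ l, v (2 * l + 2) = sinkhornStep b (fun j i => C i j) τ η (u (2 * l + 1)) := fun l => by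
    rw [(hodd (2 * l + 1) (odd_two_mul_add_one l)).1]
    funext j
    simp only [add_comm (u (2 * l + 1) _)]
    rw [log_sum_exp_add (fun i => C i j)]
    unfold sinkhornStep
    ring
  have hu' : ∀ l, u (2 * l + 2) = u (2 * l + 1) := fun l =>
    (hodd (2 * l + 1) (odd_two_mul_add_one l)).2
  have hv' : ∀ l, v (2 * l + 1) = v (2 * l) := fun l => (heven (2 * l) (even_two_mul l)).2
  have hstart : ∀ j, |v 2 j - v 0 j| ≤ 2 * (η * τ / (η + τ)) * R := by
    have hu1 : ∀ i, |u 1 i| ≤ η * τ / (η + τ) * R := fun i => by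
      have h := abs_sinkhornStep_le (D := 0) hC hτ hη hCc ham (v := v 0) (by simp [h0v]) i
      rw [zero_div, add_zero, ← hR] at h
      rwa [← hu 0] at h
    intro j
    have h := abs_sinkhornStep_le (fun j i => hC i j) hτ hη (fun j i => hCc i j) hbm hu1 j
    rw [← hR, ← hv 0] at h
    rw [h0v, Pi.zero_apply, sub_zero]
    refine h.trans ?_
    have e : η * τ / (η + τ) * R / η = τ / (η + τ) * R := by field_simp
    have h2 : τ / (η + τ) * R ≤ R :=
      mul_le_of_le_one_left hR0.le ((div_le_one (by positivity)).2 (by linarith))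
    rw [e, mul_comm 2, mul_assoc]
    exact mul_le_mul_of_nonneg_left (by linarith) (by positivity)
  have hinc := abs_sinkhorn_increment_le hτ hη hu hv hstart
  have hW : Real.log (8 * η * R) + Real.log (τ * (τ + 1)) + 3 * Real.log (U / ε)
      = Real.log (8 * R * τ * (τ + 1) / η ^ 2) := by
    have e : U / ε = η⁻¹ := by rw [hηdef, inv_div]
    have e3 : 3 * Real.log (U / ε) = Real.log ((η⁻¹) ^ 3) := by rw [e, Real.log_pow]; norm_num
    rw [e3, ← Real.log_mul (by positivity) (by positivity),
      ← Real.log_mul (by positivity) (by positivity)]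
    congr 1
    field_simp
  have hW1 : 1 ≤ 8 * R * τ * (τ + 1) / η ^ 2 := by
    rw [one_le_div (by positivity)]
    have h1 : η ≤ 8 * R * τ := by nlinarith
    nlinarith
  have hk' : 1 + (τ / η + 1) * Real.log (8 * R * τ * (τ + 1) / η ^ 2) ≤ k := by
    rw [← hW]
    rwa [hηdef, div_div_eq_mul_div, ← hηdef]
  obtain ⟨hk1, hpow⟩ := one_le_and_pow_le_of_threshold hτ hη hW1 hk'
  have hdecay : (η + τ) / η * ((τ / (η + τ)) ^ (k - 1) * (2 * (η * τ / (η + τ)) * R)) ≤ η / 8 := by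
    calc _ = 2 * τ * R * (τ / (η + τ)) ^ (k - 1) := by field_simp
      _ ≤ 2 * τ * R * (1 / (8 * R * τ * (τ + 1) / η ^ 2)) :=
          mul_le_mul_of_nonneg_left hpow (by positivity)
      _ = η * (η / (4 * (τ + 1))) := by field_simp; norm_num
      _ ≤ η * (1 / 8) := by
          refine mul_le_mul_of_nonneg_left ?_ hη.le
          rw [div_le_iff₀ (by positivity)]
          linarith
      _ = η / 8 := by ring
  have hdefr := add_mul_log_sub_eq_sinkhornStep a C hτ hη (u k) (v k)
  have hdefc := add_mul_log_sub_eq_sinkhornStep b (fun j i => C i j) hτ hη (v k) (u k)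
  simp only [add_comm (v k _) (u k _)] at hdefc
  have hbound : ∀ {z : ℝ}, |z| ≤ (τ / (η + τ)) ^ (k - 1) * (2 * (η * τ / (η + τ)) * R) →
      |(η + τ) / η * z| ≤ η / 8 := fun {z} hz => by
    rw [abs_mul, abs_of_pos (by positivity : 0 < (η + τ) / η)]
    exact (mul_le_mul_of_nonneg_left hz (by positivity)).trans hdecay
  have hD : 0 ≤ (τ / (η + τ)) ^ (k - 1) * (2 * (η * τ / (η + τ)) * R) := by positivity
  have hsmall : (∀ i, |u k i - sinkhornStep a C τ η (v k) i|
        ≤ (τ / (η + τ)) ^ (k - 1) * (2 * (η * τ / (η + τ)) * R)) ∧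
      ∀ j, |v k j - sinkhornStep b (fun j i => C i j) τ η (u k) j|
        ≤ (τ / (η + τ)) ^ (k - 1) * (2 * (η * τ / (η + τ)) * R) := by
    obtain ⟨l, rfl | rfl⟩ : ∃ l, k = 2 * l + 1 ∨ k = 2 * l + 2 := ⟨(k - 1) / 2, by omega⟩
    · refine ⟨fun i => ?_, fun j => ?_⟩
      · rw [hu, hv', sub_self, abs_zero]
        exact hD
      · rw [← hv, hv', abs_sub_comm]
        exact (hinc l).1 j
    · refine ⟨fun i => ?_, fun j => ?_⟩
      · have e := hu (l + 1)
        rw [show 2 * (l + 1) + 1 = 2 * l + 3 by ring, show 2 * (l + 1) = 2 * l + 2 by ring] at e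
        rw [← e, hu', abs_sub_comm]
        exact (hinc l).2 i
      · rw [hu', hv, sub_self, abs_zero]
        exact hD
  have hmain := fUOT_gibbs_le hn ha hb hC hτ hη rfl hτ1 hτ2 hXhat hfmin
    (u := u k) (v := v k) (X := fun i j => Real.exp ((u k i + v k j - C i j) / η))
    (fun _ _ => rfl) (fun i => by rw [hdefr]; exact hbound (hsmall.1 i))
    (fun j => by rw [hdefc]; exact hbound (hsmall.2 j))
  refine hmain.trans (add_le_add_right ?_ _)
  rw [← hS, ← hT, ← hηU]
  exact mul_le_mul_of_nonneg_left hUST hη.le
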